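/- The sequence of quotients γ(d+1)/γ(d), indexed by integers d ≥ 2, converges to 2/e as d → ∞, where γ(d) = 2^{d-2} · d² · Γ(d/2)² / (j_{d/2-1, 1})^d and e is Euler's number. -/

import Mathlib

/-- The Bessel function of the first kind `J_ν`, defined for real order `ν`
by its power series (interpreted with real powers `(x/2)^(2k+ν)`). -/
noncomputable def besselJ (ν x : ℝ) : ℝ :=
  ∑' k : ℕ, (-1 : ℝ) ^ k / (k.factorial * Real.Gamma ((k : ℝ) + ν + 1)) *
    (x / 2) ^ (2 * (k : ℝ) + ν)

/-- `j_{ν,1}`: the smallest positive zero of the Bessel function `J_ν`. -/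
noncomputable def besselJZero1 (ν : ℝ) : ℝ := sInf {r : ℝ | 0 < r ∧ besselJ ν r = 0}

/-- The Pleijel constant `γ(d) = 2^{d-2} d² Γ(d/2)² / (j_{d/2-1,1})^d`. -/
noncomputable def pleijelGamma (d : ℕ) : ℝ :=
  2 ^ ((d : ℝ) - 2) * (d : ℝ) ^ 2 * Real.Gamma ((d : ℝ) / 2) ^ 2 /
    besselJZero1 ((d : ℝ) / 2 - 1) ^ (d : ℝ)

open Filter Topology

/-- The entire function `s ↦ ∑ₖ (-s)ᵏ / (k! Γ(k + ν + 1))`, in terms of which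
`J_ν(x) = (x/2)^ν * besselSeries ν (x²/4)`. -/
noncomputable def besselSeries (ν s : ℝ) : ℝ :=
  ∑' k : ℕ, (-s) ^ k / (k.factorial * Real.Gamma (k + ν + 1))

lemma Gamma_add_one_le_Gamma_natCast_add {ν : ℝ} (hν : 0 ≤ ν) (k : ℕ) :
    Real.Gamma (ν + 1) ≤ Real.Gamma (k + ν + 1) := by
  induction k with
  | zero => simp
  | succ k ih =>
    have h0 : 0 < (k : ℝ) + ν + 1 := by positivity
    have h : ((k + 1 : ℕ) : ℝ) + ν + 1 = (k + ν + 1) + 1 := by push_cast; ring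
    rw [h, Real.Gamma_add_one h0.ne']
    have hk : (0 : ℝ) ≤ k := k.cast_nonneg
    nlinarith [Real.Gamma_pos_of_pos h0]

lemma Gamma_natCast_add_pos {ν : ℝ} (hν : 0 ≤ ν) (k : ℕ) :
    0 < Real.Gamma (k + ν + 1) :=
  Real.Gamma_pos_of_pos (by positivity)

lemma summable_besselSeries {ν : ℝ} (hν : 0 ≤ ν) (s : ℝ) :
    Summable fun k : ℕ => (-s) ^ k / (k.factorial * Real.Gamma (k + ν + 1)) := by
  refine Summable.of_norm_bounded
    ((Real.summable_pow_div_factorial |s|).div_const (Real.Gamma (ν + 1))) fun k => ?_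
  have h0 := Gamma_natCast_add_pos hν k
  have h1 : 0 < Real.Gamma (ν + 1) := Real.Gamma_pos_of_pos (by positivity)
  rw [Real.norm_eq_abs, abs_div, abs_pow, abs_neg, abs_of_pos (by positivity : 0 <
    (k.factorial : ℝ) * Real.Gamma (k + ν + 1)), div_div]
  gcongr
  exact Gamma_add_one_le_Gamma_natCast_add hν k

lemma besselSeries_zero (ν : ℝ) : besselSeries ν 0 = 1 / Real.Gamma (ν + 1) := by
  rw [besselSeries, tsum_eq_single 0]
  · simp
  · intro k hk
    simp [hk]

lemma hasDerivAt_besselSeries {ν : ℝ} (hν : 0 ≤ ν) (s : ℝ) :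
    HasDerivAt (besselSeries ν) (-besselSeries (ν + 1) s) s := by
  have hR : s ∈ Metric.ball (0 : ℝ) (|s| + 1) := by simp
  have hΓ : 0 < Real.Gamma (ν + 1) := Real.Gamma_pos_of_pos (by positivity)
  have hu : Summable fun k : ℕ =>
      ((k : ℝ) * (|s| + 1) ^ (k - 1) / k.factorial) / Real.Gamma (ν + 1) := by
    refine Summable.div_const ?_ _
    rw [← summable_nat_add_iff 1]
    refine (Real.summable_pow_div_factorial (|s| + 1)).congr fun k => ?_
    rw [Nat.factorial_succ]
    push_cast
    have : (k.factorial : ℝ) ≠ 0 := by positivity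
    field_simp
  have h := hasDerivAt_tsum_of_isPreconnected (𝕜 := ℝ) hu Metric.isOpen_ball
    (convex_ball (0 : ℝ) (|s| + 1)).isPreconnected
    (g := fun (k : ℕ) s => (-s) ^ k / (k.factorial * Real.Gamma (k + ν + 1)))
    (g' := fun (k : ℕ) s => (k * (-s) ^ (k - 1) * (-1)) / (k.factorial * Real.Gamma (k + ν + 1)))
    (fun k y _ => ((hasDerivAt_neg y).pow k).div_const _) ?_ (y₀ := s) hR
    (summable_besselSeries hν s) hR
  · refine h.congr_deriv ?_
    rw [besselSeries, Summable.tsum_eq_zero_add, ← tsum_neg]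
    · simp only [Nat.cast_zero, zero_mul, zero_div, zero_add]
      congr 1
      ext k
      rw [Nat.factorial_succ]
      push_cast
      rw [show (k : ℝ) + 1 + ν + 1 = k + (ν + 1) + 1 by ring]
      have : (k.factorial : ℝ) ≠ 0 := by positivity
      have := (Gamma_natCast_add_pos (by positivity : 0 ≤ ν + 1) k).ne'
      field_simp
    · rw [← summable_nat_add_iff 1]
      refine ((summable_besselSeries (by positivity : 0 ≤ ν + 1) s).neg).congr fun k => ?_
      rw [Nat.factorial_succ]
      push_cast
      rw [show (k : ℝ) + 1 + ν + 1 = k + (ν + 1) + 1 by ring]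
      have : (k.factorial : ℝ) ≠ 0 := by positivity
      have := (Gamma_natCast_add_pos (by positivity : 0 ≤ ν + 1) k).ne'
      field_simp
  · intro k y hy
    have h0 := Gamma_natCast_add_pos hν k
    have hy' : |y| ≤ |s| + 1 := by
      simpa using (Metric.mem_ball.1 hy).le
    rw [Real.norm_eq_abs, abs_div, abs_mul, abs_mul, abs_pow, abs_neg, abs_neg, abs_one, mul_one,
      abs_of_pos (by positivity : 0 < (k.factorial : ℝ) * Real.Gamma (k + ν + 1)), div_div,
      Nat.abs_cast]
    gcongr
    exact Gamma_add_one_le_Gamma_natCast_add hν k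

lemma besselSeries_recurrence {ν : ℝ} (hν : 0 ≤ ν) (s : ℝ) :
    besselSeries ν s = (ν + 1) * besselSeries (ν + 1) s - s * besselSeries (ν + 2) s := by
  have h1 := summable_besselSeries (by positivity : 0 ≤ ν + 1) s
  have h2 := summable_besselSeries (by positivity : 0 ≤ ν + 2) s
  simp only [besselSeries]
  rw [(summable_besselSeries hν s).tsum_eq_zero_add, h1.tsum_eq_zero_add, mul_add,
    ← tsum_mul_left, ← tsum_mul_left, add_sub_assoc, ← Summable.tsum_sub]
  · congr 1
    · have := Gamma_natCast_add_pos hν 0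
      have h3 : Real.Gamma (ν + 1 + 1) = (ν + 1) * Real.Gamma (ν + 1) :=
        Real.Gamma_add_one (by positivity)
      simp only [Nat.cast_zero, zero_add] at this ⊢
      rw [h3]
      field_simp
    · congr 1
      ext k
      have hk : (0 : ℝ) ≤ k := k.cast_nonneg
      have := Gamma_natCast_add_pos (by positivity : 0 ≤ ν + 1) k
      have h3 : Real.Gamma (k + (ν + 1) + 1 + 1) =
          (k + (ν + 1) + 1) * Real.Gamma (k + (ν + 1) + 1) :=
        Real.Gamma_add_one (by positivity)
      rw [Nat.factorial_succ]
      push_cast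
      rw [show (k : ℝ) + 1 + ν + 1 = k + (ν + 1) + 1 by ring,
        show (k : ℝ) + 1 + (ν + 1) + 1 = k + (ν + 1) + 1 + 1 by ring,
        show (k : ℝ) + (ν + 2) + 1 = k + (ν + 1) + 1 + 1 by ring, h3]
      have : (k.factorial : ℝ) ≠ 0 := by positivity
      have : (k : ℝ) + (ν + 1) + 1 ≠ 0 := by positivity
      field_simp
      ring
  · exact ((summable_nat_add_iff 1).2 h1).mul_left _
  · exact h2.mul_left _

lemma besselJ_eq_rpow_mul_besselSeries (ν : ℝ) {x : ℝ} (hx : 0 < x) :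
    besselJ ν x = (x / 2) ^ ν * besselSeries ν (x ^ 2 / 4) := by
  rw [besselJ, besselSeries, ← tsum_mul_left]
  congr 1
  ext k
  rw [Real.rpow_add (by positivity), Real.rpow_mul (by positivity), Real.rpow_natCast,
    show -(x ^ 2 / 4) = (-1) * (x / 2) ^ 2 by ring, mul_pow]
  norm_num
  ring

/-- `y` is a positive solution of `y'' = Q y` on `(-∞, 0)` that vanishes at both ends, with
derivative `y'` and logarithmic derivative tending to `n` at `-∞`. -/
structure IsGroundState (Q y y' : ℝ → ℝ) (n : ℝ) : Prop where
  hasDerivAt : ∀ t, HasDerivAt y (y' t) t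
  hasDerivAt_deriv : ∀ t, HasDerivAt y' (Q t * y t) t
  pos : ∀ t < 0, 0 < y t
  zero : y 0 = 0
  deriv_neg : y' 0 < 0
  tendsto_atBot : Tendsto y atBot (𝓝 0)
  tendsto_logDeriv : Tendsto (fun t => y' t / y t) atBot (𝓝 n)

namespace IsGroundState

variable {Q₀ Q₁ Q₂ y₀ y₁ y₂ y₀' y₁' y₂' : ℝ → ℝ} {n₀ n₁ n₂ : ℝ}

lemma tendsto_zero (h : IsGroundState Q₀ y₀ y₀' n₀) : Tendsto y₀ (𝓝[<] 0) (𝓝 0) := by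
  have := (h.hasDerivAt 0).continuousAt.tendsto
  rw [h.zero] at this
  exact this.mono_left nhdsWithin_le_nhds

lemma tendsto_deriv_zero (h : IsGroundState Q₀ y₀ y₀' n₀) :
    Tendsto y₀' (𝓝[<] 0) (𝓝 (y₀' 0)) :=
  (h.hasDerivAt_deriv 0).continuousAt.tendsto.mono_left nhdsWithin_le_nhds

lemma tendsto_div_zero (h₀ : IsGroundState Q₀ y₀ y₀' n₀) (h₂ : IsGroundState Q₂ y₂ y₂' n₂) :
    Tendsto (fun t => y₂ t / y₀ t) (𝓝[<] 0) (𝓝 (y₂' 0 / y₀' 0)) := by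
  have hs : ∀ {Q y y' n}, IsGroundState Q y y' n →
      Tendsto (fun t => y t / t) (𝓝[<] 0) (𝓝 (y' 0)) := fun {Q y y' n} h => by
    have := (hasDerivAt_iff_tendsto_slope.1 (h.hasDerivAt 0)).mono_left
      (nhdsWithin_mono _ (fun t (ht : t < 0) => ht.ne))
    refine this.congr fun t => ?_
    rw [slope_def_field, h.zero, sub_zero, sub_zero]
  refine ((hs h₂).div (hs h₀) h₀.deriv_neg.ne).congr' ?_
  filter_upwards [self_mem_nhdsWithin] with t ht
  have ht : t ≠ 0 := ne_of_lt ht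
  exact div_div_div_cancel_right₀ ht _ _

lemma tendsto_mul_geom_mean_div_zero {a b : ℝ} (ha : 0 ≤ a) (hb : 0 ≤ b) (hab : a + b = 1)
    (h₀ : IsGroundState Q₀ y₀ y₀' n₀) (h₁ : IsGroundState Q₁ y₁ y₁' n₁)
    (h₂ : IsGroundState Q₂ y₂ y₂' n₂) :
    Tendsto (fun t => y₁ t * (y₀ t ^ a * y₂ t ^ b / y₀ t)) (𝓝[<] 0) (𝓝 0) := by
  have hlim : Tendsto (fun t => y₁ t * (a + b * (y₂ t / y₀ t))) (𝓝[<] 0) (𝓝 0) := by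
    simpa using h₁.tendsto_zero.mul
      (((h₀.tendsto_div_zero h₂).const_mul b).const_add a)
  refine tendsto_of_tendsto_of_tendsto_of_le_of_le' tendsto_const_nhds hlim ?_ ?_
  · filter_upwards [self_mem_nhdsWithin] with t ht
    have := h₀.pos t ht
    have := h₁.pos t ht
    have := h₂.pos t ht
    positivity
  · filter_upwards [self_mem_nhdsWithin] with t ht
    have p₀ := h₀.pos t ht
    have p₁ := h₁.pos t ht
    have p₂ := h₂.pos t ht
    have := Real.geom_mean_le_arith_mean2_weighted ha hb p₀.le p₂.le hab
    refine mul_le_mul_of_nonneg_left ?_ p₁.le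
    rw [div_le_iff₀ p₀]
    refine this.trans_eq ?_
    field_simp

lemma tendsto_geom_mean {a b : ℝ} (ha : 0 ≤ a) (hb : 0 ≤ b) (hab : a + b = 1) {l : Filter ℝ}
    (hl : ∀ᶠ t in l, t < 0)
    (h₀ : IsGroundState Q₀ y₀ y₀' n₀) (h₂ : IsGroundState Q₂ y₂ y₂' n₂)
    (hl₀ : Tendsto y₀ l (𝓝 0)) (hl₂ : Tendsto y₂ l (𝓝 0)) :
    Tendsto (fun t => y₀ t ^ a * y₂ t ^ b) l (𝓝 0) := by
  have hlim : Tendsto (fun t => a * y₀ t + b * y₂ t) l (𝓝 0) := by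
    simpa using (hl₀.const_mul a).add (hl₂.const_mul b)
  refine tendsto_of_tendsto_of_tendsto_of_le_of_le' tendsto_const_nhds hlim ?_ ?_
  · filter_upwards [hl] with t ht
    have := h₀.pos t ht
    have := h₂.pos t ht
    positivity
  · filter_upwards [hl] with t ht
    exact Real.geom_mean_le_arith_mean2_weighted ha hb (h₀.pos t ht).le (h₂.pos t ht).le hab

/-- Three-function Sturm comparison: the weighted geometric mean of two ground states is compared
with a third one through their Wronskian. -/
theorem exists_potential_le {a b : ℝ} (ha : 0 ≤ a) (hb : 0 ≤ b) (hab : a + b = 1)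
    (h₀ : IsGroundState Q₀ y₀ y₀' n₀) (h₁ : IsGroundState Q₁ y₁ y₁' n₁)
    (h₂ : IsGroundState Q₂ y₂ y₂' n₂) : ∃ t < 0, Q₁ t ≤ a * Q₀ t + b * Q₂ t := by
  by_contra! hQ
  set z : ℝ → ℝ := fun t => y₀ t ^ a * y₂ t ^ b with hz
  set p : ℝ → ℝ := fun t => a * (y₀' t / y₀ t) + b * (y₂' t / y₂ t) with hp
  set W : ℝ → ℝ := fun t => z t * (y₁' t - y₁ t * p t) with hW
  have hderiv : ∀ t < 0, ∃ w > 0, HasDerivAt W w t := by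
    intro t ht
    have p₀ := h₀.pos t ht
    have p₁ := h₁.pos t ht
    have p₂ := h₂.pos t ht
    have hzpos : 0 < z t := by positivity
    have dz : HasDerivAt z (z t * p t) t := by
      refine (((h₀.hasDerivAt t).rpow_const (p := a) (.inl p₀.ne')).mul
        ((h₂.hasDerivAt t).rpow_const (p := b) (.inl p₂.ne'))).congr_deriv ?_
      rw [Real.rpow_sub_one p₀.ne', Real.rpow_sub_one p₂.ne']
      simp only [hz, hp]
      field_simp
    have dp : HasDerivAt p (a * ((Q₀ t * y₀ t * y₀ t - y₀' t * y₀' t) / y₀ t ^ 2) +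
        b * ((Q₂ t * y₂ t * y₂ t - y₂' t * y₂' t) / y₂ t ^ 2)) t :=
      (((h₀.hasDerivAt_deriv t).div (h₀.hasDerivAt t) p₀.ne').const_mul a).add
      (((h₂.hasDerivAt_deriv t).div (h₂.hasDerivAt t) p₂.ne').const_mul b)
    have dW := dz.mul ((h₁.hasDerivAt_deriv t).sub ((h₁.hasDerivAt t).mul dp))
    refine ⟨z t * y₁ t * ((Q₁ t - (a * Q₀ t + b * Q₂ t)) +
      a * b * (y₀' t / y₀ t - y₂' t / y₂ t) ^ 2), ?_, dW.congr_deriv ?_⟩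
    · have := sub_pos.2 (hQ t ht)
      positivity
    · obtain rfl : b = 1 - a := by linarith
      simp only [hp, Pi.sub_apply, Pi.mul_apply]
      field_simp
      ring
  have hmono : StrictMonoOn W (Set.Iio 0) := by
    refine strictMonoOn_of_deriv_pos (convex_Iio 0) (fun t ht => ?_) fun t ht => ?_
    · obtain ⟨w, -, hw⟩ := hderiv t ht
      exact hw.continuousAt.continuousWithinAt
    · rw [interior_Iio] at ht
      obtain ⟨w, hw0, hw⟩ := hderiv t ht
      rwa [hw.deriv]
  have hbot : Tendsto W atBot (𝓝 0) := by
    have h := ((tendsto_geom_mean ha hb hab (eventually_lt_atBot 0) h₀ h₂ h₀.tendsto_atBot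
      h₂.tendsto_atBot).mul h₁.tendsto_atBot).mul
      (h₁.tendsto_logDeriv.sub ((h₀.tendsto_logDeriv.const_mul a).add
        (h₂.tendsto_logDeriv.const_mul b)))
    simp only [mul_zero, zero_mul] at h
    refine h.congr' ?_
    filter_upwards [eventually_lt_atBot 0] with t ht
    have p₁ := h₁.pos t ht
    simp only [hW, hz, hp]
    field_simp
  have hzero : Tendsto W (𝓝[<] 0) (𝓝 0) := by
    have e₀ := tendsto_mul_geom_mean_div_zero ha hb hab h₀ h₁ h₂
    have e₂ := tendsto_mul_geom_mean_div_zero hb ha (by linarith) h₂ h₁ h₀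
    have h := ((tendsto_geom_mean ha hb hab self_mem_nhdsWithin h₀ h₂ h₀.tendsto_zero
      h₂.tendsto_zero).mul h₁.tendsto_deriv_zero).sub
      (((e₀.mul h₀.tendsto_deriv_zero).const_mul a).add
        ((e₂.mul h₂.tendsto_deriv_zero).const_mul b))
    simp only [mul_zero, zero_mul, add_zero, sub_zero] at h
    refine h.congr' ?_
    filter_upwards [self_mem_nhdsWithin] with t ht
    have p₀ := h₀.pos t ht
    have p₂ := h₂.pos t ht
    simp only [hW, hz, hp]
    field_simp
  have h2 : 0 ≤ W (-2) := by
    refine le_of_tendsto hbot ?_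
    filter_upwards [eventually_lt_atBot (-2 : ℝ)] with t ht
    exact (hmono (Set.mem_Iio.2 (by linarith)) (by simp) ht).le
  have h1 : W (-1) ≤ 0 := by
    refine ge_of_tendsto hzero ?_
    filter_upwards [Ioo_mem_nhdsLT (show (-1 : ℝ) < 0 by norm_num)] with t ht
    exact (hmono (by simp) ht.2 ht.1).le
  have := hmono (a := -2) (b := -1) (by simp) (by simp) (by norm_num)
  linarith

end IsGroundState

/-- The Bessel function in the logarithmic variable, up to a constant factor:
`J_ν(m eᵗ) = (m/2)^ν * besselExp ν (m²) t`. -/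
noncomputable def besselExp (ν μ t : ℝ) : ℝ :=
  Real.exp (ν * t) * besselSeries ν (μ * Real.exp (2 * t) / 4)

/-- The derivative of `besselExp` with respect to the logarithmic variable. -/
noncomputable def besselExpDeriv (ν μ t : ℝ) : ℝ :=
  Real.exp (ν * t) * (ν * besselSeries ν (μ * Real.exp (2 * t) / 4) -
    2 * (μ * Real.exp (2 * t) / 4) * besselSeries (ν + 1) (μ * Real.exp (2 * t) / 4))

section besselExp

variable {ν : ℝ} (μ t : ℝ)

lemma hasDerivAt_exp_const_mul (c t : ℝ) :
    HasDerivAt (fun t => Real.exp (c * t)) (c * Real.exp (c * t)) t :=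
  (((hasDerivAt_id' t).const_mul c).exp).congr_deriv (by ring)

lemma hasDerivAt_besselSeries_exp (hν : 0 ≤ ν) :
    HasDerivAt (fun t => besselSeries ν (μ * Real.exp (2 * t) / 4))
      (-(2 * (μ * Real.exp (2 * t) / 4) * besselSeries (ν + 1) (μ * Real.exp (2 * t) / 4))) t := by
  have hs := (((hasDerivAt_exp_const_mul 2 t).const_mul μ).div_const 4)
  exact ((hasDerivAt_besselSeries hν _).comp t hs).congr_deriv (by ring)

lemma hasDerivAt_besselExp (hν : 0 ≤ ν) :
    HasDerivAt (besselExp ν μ) (besselExpDeriv ν μ t) t := by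
  refine ((hasDerivAt_exp_const_mul ν t).mul
    (hasDerivAt_besselSeries_exp μ t hν)).congr_deriv ?_
  rw [besselExpDeriv]
  ring

lemma hasDerivAt_besselExpDeriv (hν : 0 ≤ ν) :
    HasDerivAt (besselExpDeriv ν μ)
      ((ν ^ 2 - μ * Real.exp (2 * t)) * besselExp ν μ t) t := by
  have hs := ((((hasDerivAt_exp_const_mul 2 t).const_mul μ).div_const 4).const_mul 2)
  have h0 := hasDerivAt_besselSeries_exp μ t hν
  have h1 := hasDerivAt_besselSeries_exp μ t (by positivity : 0 ≤ ν + 1)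
  refine ((hasDerivAt_exp_const_mul ν t).mul
    ((h0.const_mul ν).sub (hs.mul h1))).congr_deriv ?_
  rw [besselExp, show ν + 1 + 1 = ν + 2 by ring]
  set s := μ * Real.exp (2 * t) / 4 with h_s
  have hμ : μ * Real.exp (2 * t) = 4 * s := by rw [h_s]; ring
  have hr := besselSeries_recurrence hν s
  simp only [Pi.sub_apply, Pi.mul_apply, ← h_s]
  rw [show μ * (2 * Real.exp (2 * t)) = 8 * s by linarith, hμ]
  linear_combination (4 * s * Real.exp (ν * t)) * hr

lemma continuous_besselExp (hν : 0 ≤ ν) : Continuous (besselExp ν μ) :=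
  continuous_iff_continuousAt.2 fun t => (hasDerivAt_besselExp μ t hν).continuousAt

lemma tendsto_besselSeries_exp_atBot (hν : 0 ≤ ν) :
    Tendsto (fun t => besselSeries ν (μ * Real.exp (2 * t) / 4)) atBot
      (𝓝 (1 / Real.Gamma (ν + 1))) := by
  have h2 : Tendsto (fun t : ℝ => Real.exp (2 * t)) atBot (𝓝 0) :=
    Real.tendsto_exp_atBot.comp (tendsto_id.const_mul_atBot two_pos)
  have h : Tendsto (fun t : ℝ => μ * Real.exp (2 * t) / 4) atBot (𝓝 0) := by
    simpa using (h2.const_mul μ).div_const 4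
  have hc := (hasDerivAt_besselSeries hν 0).continuousAt.tendsto
  rw [besselSeries_zero] at hc
  exact hc.comp h

lemma tendsto_besselExp_atBot (hν : 0 < ν) : Tendsto (besselExp ν μ) atBot (𝓝 0) := by
  have h : Tendsto (fun t : ℝ => Real.exp (ν * t)) atBot (𝓝 0) :=
    Real.tendsto_exp_atBot.comp (tendsto_id.const_mul_atBot hν)
  have := h.mul (tendsto_besselSeries_exp_atBot μ hν.le)
  rwa [zero_mul] at this

lemma eventually_besselExp_pos (hν : 0 ≤ ν) : ∀ᶠ t in atBot, 0 < besselExp ν μ t := by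
  have h1 : 0 < 1 / Real.Gamma (ν + 1) :=
    one_div_pos.2 (Real.Gamma_pos_of_pos (by positivity))
  filter_upwards [(tendsto_besselSeries_exp_atBot μ hν).eventually_const_lt h1] with t ht
  exact mul_pos (Real.exp_pos _) ht

lemma tendsto_besselExpDeriv_div_besselExp (hν : 0 ≤ ν) :
    Tendsto (fun t => besselExpDeriv ν μ t / besselExp ν μ t) atBot (𝓝 ν) := by
  have h0 := tendsto_besselSeries_exp_atBot μ hν
  have h1 := tendsto_besselSeries_exp_atBot μ (by positivity : 0 ≤ ν + 1)
  have h2 : Tendsto (fun t : ℝ => 2 * (μ * Real.exp (2 * t) / 4)) atBot (𝓝 0) := by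
    have h2 : Tendsto (fun t : ℝ => Real.exp (2 * t)) atBot (𝓝 0) :=
      Real.tendsto_exp_atBot.comp (tendsto_id.const_mul_atBot two_pos)
    simpa using ((h2.const_mul μ).div_const 4).const_mul 2
  have hΓ : 1 / Real.Gamma (ν + 1) ≠ 0 :=
    (one_div_pos.2 (Real.Gamma_pos_of_pos (by positivity))).ne'
  have h := ((h0.const_mul ν).sub (h2.mul h1)).div h0 hΓ
  rw [zero_mul, sub_zero, mul_div_cancel_right₀ _ hΓ] at h
  refine h.congr fun t => ?_
  rw [besselExpDeriv, besselExp, mul_div_mul_left _ _ (Real.exp_pos _).ne', Pi.div_apply]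

lemma tendsto_besselExpDeriv_atBot (hν : 0 < ν) :
    Tendsto (besselExpDeriv ν μ) atBot (𝓝 0) := by
  have h := (tendsto_besselExpDeriv_div_besselExp μ hν.le).mul (tendsto_besselExp_atBot μ hν)
  rw [mul_zero] at h
  refine h.congr' ?_
  filter_upwards [eventually_besselExp_pos μ hν.le] with t ht
  exact div_mul_cancel₀ _ ht.ne'

lemma besselJ_exp (ν t : ℝ) : besselJ ν (Real.exp t) = (1 / 2) ^ ν * besselExp ν 1 t := by
  rw [besselJ_eq_rpow_mul_besselSeries ν (Real.exp_pos t), besselExp,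
    show Real.exp t / 2 = 1 / 2 * Real.exp t by ring,
    Real.mul_rpow (by norm_num) (Real.exp_pos t).le, ← Real.exp_mul, ← Real.exp_nat_mul,
    mul_comm t ν, one_mul]
  push_cast
  ring

lemma besselExp_exp_sq (ν r t : ℝ) :
    besselExp ν (Real.exp r ^ 2) t = Real.exp (-(ν * r)) * besselExp ν 1 (t + r) := by
  rw [besselExp, besselExp, ← mul_assoc, ← Real.exp_add, ← Real.exp_nat_mul, ← Real.exp_add]
  congr 2
  · ring
  · rw [one_mul]
    congr 2
    push_cast
    ring

lemma sq_lt_of_besselExp_zero {μ : ℝ} (hν : 0 < ν) (hμ : 0 ≤ μ) (hpos : ∀ t < 0, 0 < besselExp ν μ t)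
    (h0 : besselExp ν μ 0 = 0) : ν ^ 2 < μ := by
  by_contra! hle
  have hd' : MonotoneOn (besselExpDeriv ν μ) (Set.Iio 0) := by
    refine monotoneOn_of_deriv_nonneg (convex_Iio 0)
      (fun t _ => (hasDerivAt_besselExpDeriv μ t hν.le).continuousAt.continuousWithinAt)
      (fun t _ => (hasDerivAt_besselExpDeriv μ t hν.le).differentiableAt.differentiableWithinAt)
      fun t ht => ?_
    rw [interior_Iio] at ht
    rw [(hasDerivAt_besselExpDeriv μ t hν.le).deriv]
    refine mul_nonneg ?_ (hpos t ht).le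
    have : Real.exp (2 * t) ≤ 1 := Real.exp_le_one_iff.2 (by linarith [Set.mem_Iio.1 ht])
    nlinarith
  have hnonneg : ∀ t < 0, 0 ≤ besselExpDeriv ν μ t := fun t ht => by
    refine le_of_tendsto (tendsto_besselExpDeriv_atBot μ hν) ?_
    filter_upwards [eventually_lt_atBot t] with u hu
    exact hd' (hu.trans ht) ht hu.le
  have hm : MonotoneOn (besselExp ν μ) (Set.Iic 0) := by
    refine monotoneOn_of_deriv_nonneg (convex_Iic 0)
      (continuous_besselExp μ hν.le).continuousOn
      (fun t _ => (hasDerivAt_besselExp μ t hν.le).differentiableAt.differentiableWithinAt)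
      fun t ht => ?_
    rw [interior_Iic] at ht
    rw [(hasDerivAt_besselExp μ t hν.le).deriv]
    exact hnonneg t ht
  have h1 := hm (a := -1) (b := 0) (by simp) (by simp) (by norm_num)
  have h2 := hpos (-1) (by norm_num)
  linarith

lemma besselExpDeriv_neg {μ : ℝ} (hν : 0 < ν) (hμ : 0 ≤ μ) (hpos : ∀ t < 0, 0 < besselExp ν μ t)
    (h0 : besselExp ν μ 0 = 0) : besselExpDeriv ν μ 0 < 0 := by
  by_contra! hle
  have hlt := sq_lt_of_besselExp_zero hν hμ hpos h0
  have hQ : ∀ᶠ t in 𝓝[<] (0 : ℝ), ν ^ 2 - μ * Real.exp (2 * t) < 0 := by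
    have hc : Continuous fun t : ℝ => ν ^ 2 - μ * Real.exp (2 * t) := by fun_prop
    refine (hc.tendsto 0).mono_left nhdsWithin_le_nhds |>.eventually_lt_const ?_
    simpa using hlt
  obtain ⟨δ, hδ, hQδ⟩ := mem_nhdsLT_iff_exists_Ioo_subset.1 hQ
  have hanti : StrictAntiOn (besselExpDeriv ν μ) (Set.Icc δ 0) := by
    refine strictAntiOn_of_deriv_neg (convex_Icc δ 0)
      (fun t _ => (hasDerivAt_besselExpDeriv μ t hν.le).continuousAt.continuousWithinAt)
      fun t ht => ?_
    rw [interior_Icc] at ht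
    rw [(hasDerivAt_besselExpDeriv μ t hν.le).deriv]
    exact mul_neg_of_neg_of_pos (hQδ ht) (hpos t ht.2)
  have hδ : δ < 0 := hδ
  have hmono : StrictMonoOn (besselExp ν μ) (Set.Icc δ 0) := by
    refine strictMonoOn_of_deriv_pos (convex_Icc δ 0)
      (continuous_besselExp μ hν.le).continuousOn fun t ht => ?_
    rw [interior_Icc] at ht
    rw [(hasDerivAt_besselExp μ t hν.le).deriv]
    exact hle.trans_lt (hanti ⟨ht.1.le, ht.2.le⟩ ⟨hδ.le, le_rfl⟩ ht.2)
  have h1 := hmono ⟨le_rfl, hδ.le⟩ ⟨hδ.le, le_rfl⟩ hδ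
  have h2 := hpos δ hδ
  linarith

end besselExp

lemma exists_first_zero {f : ℝ → ℝ} (hf : Continuous f) (hbot : ∀ᶠ t in atBot, 0 < f t) {t₀ : ℝ}
    (h₀ : f t₀ ≤ 0) : ∃ r ≤ t₀, f r = 0 ∧ ∀ t < r, 0 < f t := by
  obtain ⟨A, hA⟩ := eventually_atBot.1 hbot
  have hbdd : BddBelow {t | f t ≤ 0} :=
    ⟨A, fun t ht => le_of_lt (not_le.1 fun h => (hA t h).not_ge ht)⟩
  have hmem : sInf {t | f t ≤ 0} ∈ {t | f t ≤ 0} :=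
    (isClosed_le hf continuous_const).csInf_mem ⟨t₀, h₀⟩ hbdd
  have hpos : ∀ t < sInf {t | f t ≤ 0}, 0 < f t := fun t ht =>
    not_le.1 fun h => ht.not_ge (csInf_le hbdd h)
  refine ⟨sInf {t | f t ≤ 0}, csInf_le hbdd h₀, le_antisymm hmem ?_, hpos⟩
  refine ge_of_tendsto ((hf.tendsto _).mono_left (nhdsWithin_le_nhds (s := Set.Iio (sInf {t | f t ≤ 0})))) ?_
  filter_upwards [self_mem_nhdsWithin] with t ht
  exact (hpos t ht).le

/-- Rescaled by its first zero `besselJZero1 ν`, the function `J_ν` is a ground state in the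
logarithmic variable. -/
def IsBesselGroundState (ν : ℝ) : Prop :=
  IsGroundState (fun t => ν ^ 2 - besselJZero1 ν ^ 2 * Real.exp (2 * t))
    (besselExp ν (besselJZero1 ν ^ 2)) (besselExpDeriv ν (besselJZero1 ν ^ 2)) ν

lemma besselJZero1_of_nonpos {ν t₀ : ℝ} (hν : 0 < ν) (h₀ : besselExp ν 1 t₀ ≤ 0) :
    IsBesselGroundState ν ∧ ν < besselJZero1 ν ∧ besselJZero1 ν ≤ Real.exp t₀ := by
  obtain ⟨r, hr, hr0, hrpos⟩ := exists_first_zero (continuous_besselExp 1 hν.le)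
    (eventually_besselExp_pos 1 hν.le) h₀
  have hj : besselJZero1 ν = Real.exp r := by
    refine IsLeast.csInf_eq ⟨⟨Real.exp_pos r, by rw [besselJ_exp, hr0, mul_zero]⟩, ?_⟩
    rintro x ⟨hx, hx0⟩
    rw [← Real.exp_log hx] at hx0 ⊢
    rw [besselJ_exp] at hx0
    refine Real.exp_le_exp.2 (not_lt.1 fun h => ?_)
    have := hrpos _ h
    have : (0 : ℝ) < (1 / 2) ^ ν * besselExp ν 1 (Real.log x) := by positivity
    exact this.ne' hx0
  have hpos : ∀ t < 0, 0 < besselExp ν (besselJZero1 ν ^ 2) t := fun t ht => by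
    rw [hj, besselExp_exp_sq]
    exact mul_pos (Real.exp_pos _) (hrpos _ (by linarith))
  have hzero : besselExp ν (besselJZero1 ν ^ 2) 0 = 0 := by
    rw [hj, besselExp_exp_sq, zero_add, hr0, mul_zero]
  refine ⟨⟨fun t => hasDerivAt_besselExp _ t hν.le, fun t => hasDerivAt_besselExpDeriv _ t hν.le,
    hpos, hzero, besselExpDeriv_neg hν (sq_nonneg _) hpos hzero, tendsto_besselExp_atBot _ hν,
    tendsto_besselExpDeriv_div_besselExp _ hν.le⟩, ?_, ?_⟩
  · refine lt_of_pow_lt_pow_left₀ 2 ?_ (sq_lt_of_besselExp_zero hν (sq_nonneg _) hpos hzero)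
    rw [hj]
    positivity
  · rw [hj]
    exact Real.exp_le_exp.2 hr

/-- Sturm comparison with a sine function: an upper bound for the first zero of `J_ν`. -/
lemma besselJZero1_le {ν α : ℝ} (hν : 0 < ν) (hα : 0 < α)
    (h : (2 * Real.pi / α) ^ 2 < ν ^ 2 * α) :
    IsBesselGroundState ν ∧ ν < besselJZero1 ν ∧ besselJZero1 ν ≤ Real.exp α * ν := by
  suffices H : ∃ t₀ ≤ Real.log ν + α, besselExp ν 1 t₀ ≤ 0 by
    obtain ⟨t₀, ht₀, h₀⟩ := H
    obtain ⟨h1, h2, h3⟩ := besselJZero1_of_nonpos hν h₀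
    refine ⟨h1, h2, h3.trans ?_⟩
    calc Real.exp t₀ ≤ Real.exp (Real.log ν + α) := Real.exp_le_exp.2 ht₀
      _ = Real.exp α * ν := by rw [Real.exp_add, Real.exp_log hν, mul_comm]
  by_contra! hpos
  set k := 2 * Real.pi / α with hk
  have hkpos : 0 < k := by positivity
  set a := Real.log ν + α / 2 with ha
  set b := Real.log ν + α with hb
  have hab : a < b := by linarith
  have hkab : k * (b - a) = Real.pi := by
    rw [hk, ha, hb]
    field_simp
    ring
  set W : ℝ → ℝ := fun t => besselExpDeriv ν 1 t * Real.sin (k * (t - a)) -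
    besselExp ν 1 t * (k * Real.cos (k * (t - a))) with hW
  have hd : ∀ t, HasDerivAt W ((ν ^ 2 - Real.exp (2 * t) + k ^ 2) * besselExp ν 1 t *
      Real.sin (k * (t - a))) t := fun t => by
    have hl : HasDerivAt (fun t => k * (t - a)) k t := by
      simpa using ((hasDerivAt_id' t).sub_const a).const_mul k
    refine (((hasDerivAt_besselExpDeriv 1 t hν.le).mul hl.sin).sub
      ((hasDerivAt_besselExp 1 t hν.le).mul (hl.cos.const_mul k))).congr_deriv ?_
    ring
  have hanti : AntitoneOn W (Set.Icc a b) := by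
    refine antitoneOn_of_deriv_nonpos (convex_Icc a b)
      (fun t _ => (hd t).continuousAt.continuousWithinAt)
      (fun t _ => (hd t).differentiableAt.differentiableWithinAt) fun t ht => ?_
    rw [interior_Icc] at ht
    rw [(hd t).deriv]
    have hs : 0 ≤ Real.sin (k * (t - a)) := by
      refine Real.sin_nonneg_of_nonneg_of_le_pi
        (mul_nonneg hkpos.le (sub_nonneg.2 ht.1.le)) ?_
      rw [← hkab]
      have := ht.2
      gcongr
    refine mul_nonpos_of_nonpos_of_nonneg
      (mul_nonpos_of_nonpos_of_nonneg ?_ (hpos t ht.2.le).le) hs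
    have he : ν ^ 2 * Real.exp α ≤ Real.exp (2 * t) := by
      have : ν ^ 2 * Real.exp α = Real.exp (2 * a) := by
        rw [ha, mul_add, Real.exp_add, two_mul (Real.log ν), Real.exp_add,
          Real.exp_log hν, mul_div_cancel₀ α two_ne_zero, sq]
      rw [this]
      exact Real.exp_le_exp.2 (by linarith [ht.1])
    have := Real.add_one_le_exp α
    nlinarith [sq_nonneg ν]
  have h1 := hanti ⟨le_rfl, hab.le⟩ ⟨hab.le, le_rfl⟩ hab.le
  simp only [hW, hkab, sub_self, mul_zero, Real.sin_zero, Real.cos_zero, Real.sin_pi,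
    Real.cos_pi, mul_one, zero_sub] at h1
  have pa := mul_pos (hpos a hab.le) hkpos
  have pb := mul_pos (hpos b le_rfl) hkpos
  linarith

lemma IsBesselGroundState.lt {ν₀ ν₁ : ℝ} (hν₀ : 0 ≤ ν₀) (hν : ν₀ < ν₁)
    (h₀ : IsBesselGroundState ν₀) (h₁ : IsBesselGroundState ν₁) (hj₁ : 0 ≤ besselJZero1 ν₁) :
    besselJZero1 ν₀ < besselJZero1 ν₁ := by
  by_contra! hle
  obtain ⟨t, -, ht⟩ := IsGroundState.exists_potential_le zero_le_one le_rfl (add_zero 1) h₀ h₁ h₀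
  have h1 : ν₀ ^ 2 < ν₁ ^ 2 := by gcongr
  have h2 : besselJZero1 ν₁ ^ 2 * Real.exp (2 * t) ≤ besselJZero1 ν₀ ^ 2 * Real.exp (2 * t) := by
    gcongr
  linarith

/-- `ν²` is a convex function of the square of the first zero of `J_ν`. -/
lemma IsBesselGroundState.slope_le {ν₀ ν₁ ν₂ : ℝ} (h₀ : IsBesselGroundState ν₀)
    (h₁ : IsBesselGroundState ν₁) (h₂ : IsBesselGroundState ν₂)
    (h01 : besselJZero1 ν₀ ^ 2 < besselJZero1 ν₁ ^ 2)
    (h12 : besselJZero1 ν₁ ^ 2 < besselJZero1 ν₂ ^ 2) :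
    (ν₁ ^ 2 - ν₀ ^ 2) / (besselJZero1 ν₁ ^ 2 - besselJZero1 ν₀ ^ 2) ≤
      (ν₂ ^ 2 - ν₁ ^ 2) / (besselJZero1 ν₂ ^ 2 - besselJZero1 ν₁ ^ 2) := by
  have d01 := sub_pos.2 h01
  have d12 := sub_pos.2 h12
  have d02 := sub_pos.2 (h01.trans h12)
  obtain ⟨t, -, ht⟩ := IsGroundState.exists_potential_le (div_nonneg d12.le d02.le)
    (div_nonneg d01.le d02.le) (by field_simp; ring) h₀ h₁ h₂
  set E := Real.exp (2 * t)
  rw [div_mul_eq_mul_div, div_mul_eq_mul_div, ← add_div, le_div_iff₀ d02] at ht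
  rw [div_le_div_iff₀ d01 d12]
  linarith

lemma tendsto_besselJZero1_div_self :
    Tendsto (fun ν => besselJZero1 ν / ν) atTop (𝓝 1) := by
  have key : ∀ α > 0, ∀ᶠ ν : ℝ in atTop, 0 < ν ∧
      ν < besselJZero1 ν ∧ besselJZero1 ν ≤ Real.exp α * ν := fun α hα => by
    have h : Tendsto (fun ν : ℝ => ν ^ 2 * α) atTop atTop :=
      (tendsto_pow_atTop two_ne_zero).atTop_mul_const hα
    filter_upwards [eventually_gt_atTop 0, h.eventually_gt_atTop ((2 * Real.pi / α) ^ 2)]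
      with ν hν hνα
    exact ⟨hν, (besselJZero1_le hν hα hνα).2⟩
  refine tendsto_order.2 ⟨fun c hc => ?_, fun c hc => ?_⟩
  · filter_upwards [key 1 one_pos] with ν ⟨hν, h, _⟩
    exact hc.trans ((one_lt_div hν).2 h)
  · have hlog : 0 < Real.log c := Real.log_pos hc
    filter_upwards [key (Real.log c / 2) (by positivity)] with ν ⟨hν, _, h⟩
    refine ((div_le_iff₀ hν).2 h).trans_lt ?_
    calc Real.exp (Real.log c / 2) < Real.exp (Real.log c) := Real.exp_lt_exp.2 (by linarith)
      _ = c := Real.exp_log (by linarith)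

/-- If the slopes `(A (n+1) - A n) / (M (n+1) - M n)` are monotone and `A n ∼ M n → ∞`, then the
slopes tend to `1`. -/
lemma tendsto_slope_of_monotone {A M : ℕ → ℝ} {N : ℕ} (hM : ∀ n ≥ N, M n < M (n + 1))
    (hS : ∀ n ≥ N, (A (n + 1) - A n) / (M (n + 1) - M n) ≤
      (A (n + 2) - A (n + 1)) / (M (n + 2) - M (n + 1)))
    (hMtop : Tendsto M atTop atTop) (hAM : Tendsto (fun n => A n / M n) atTop (𝓝 1)) :
    Tendsto (fun n => (A (n + 1) - A n) / (M (n + 1) - M n)) atTop (𝓝 1) := by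
  set S : ℕ → ℝ := fun n => (A (n + 1) - A n) / (M (n + 1) - M n) with hSdef
  have hSmono : ∀ n ≥ N, ∀ m ≥ n, S n ≤ S m := fun n hn m hm => by
    induction m, hm using Nat.le_induction with
    | base => exact le_rfl
    | succ m hm ih => exact ih.trans (hS m (hn.trans hm))
  have hstep : ∀ n ≥ N, A (n + 1) - A n = S n * (M (n + 1) - M n) := fun n hn =>
    (div_mul_cancel₀ _ (sub_pos.2 (hM n hn)).ne').symm
  have hlim : ∀ c n, Tendsto (fun m => (A m - A n - c * (M m - M n)) / M m) atTop
      (𝓝 (1 - c)) := fun c n => by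
    have h : Tendsto (fun m => A m / M m - (A n - c * M n) / M m - c) atTop (𝓝 (1 - 0 - c)) :=
      (hAM.sub (hMtop.const_div_atTop _)).sub_const c
    rw [sub_zero] at h
    refine h.congr' ?_
    filter_upwards [hMtop.eventually_gt_atTop 0] with m hm
    field_simp
    ring
  have hle : ∀ n ≥ N, S n ≤ 1 := fun n hn => by
    refine sub_nonneg.1 (ge_of_tendsto (hlim (S n) n) ?_)
    filter_upwards [hMtop.eventually_gt_atTop 0, eventually_ge_atTop n] with m hm hnm
    refine div_nonneg ?_ hm.le
    clear hm
    induction m, hnm using Nat.le_induction with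
    | base => simp
    | succ m hnm ih =>
      have h1 := hstep m (hn.trans hnm)
      have h2 := mul_le_mul_of_nonneg_right (hSmono n hn m hnm)
        (sub_pos.2 (hM m (hn.trans hnm))).le
      linarith
  refine tendsto_order.2 ⟨fun c hc => ?_, fun c hc => ?_⟩
  · suffices h : ∃ n ≥ N, c < S n by
      obtain ⟨n, hn, h⟩ := h
      filter_upwards [eventually_ge_atTop n] with m hm
      exact h.trans_le (hSmono n hn m hm)
    by_contra! hcon
    refine hc.not_ge (sub_nonpos.1 (le_of_tendsto (hlim c N) ?_))
    filter_upwards [hMtop.eventually_gt_atTop 0, eventually_ge_atTop N] with m hm hNm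
    refine div_nonpos_of_nonpos_of_nonneg ?_ hm.le
    clear hm
    induction m, hNm using Nat.le_induction with
    | base => simp
    | succ m hNm ih =>
      have h1 := hstep m hNm
      have h2 := mul_le_mul_of_nonneg_right (hcon m hNm) (sub_pos.2 (hM m hNm)).le
      linarith
  · filter_upwards [eventually_ge_atTop N] with n hn
    exact (hle n hn).trans_lt hc

lemma Gamma_add_half_sq_le {x : ℝ} (hx : 0 < x) :
    Real.Gamma (x + 1 / 2) ^ 2 ≤ Real.Gamma x * Real.Gamma (x + 1) := by
  have h := Real.Gamma_mul_add_mul_le_rpow_Gamma_mul_rpow_Gamma hx (by positivity : 0 < x + 1)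
    (half_pos one_pos) (half_pos one_pos) (add_halves 1)
  rw [show 1 / 2 * x + 1 / 2 * (x + 1) = x + 1 / 2 by ring, ← Real.sqrt_eq_rpow,
    ← Real.sqrt_eq_rpow] at h
  have h0 := Real.Gamma_pos_of_pos hx
  have h1 := Real.Gamma_pos_of_pos (by positivity : 0 < x + 1)
  have h2 := Real.Gamma_pos_of_pos (by positivity : 0 < x + 1 / 2)
  calc Real.Gamma (x + 1 / 2) ^ 2 ≤ (√(Real.Gamma x) * √(Real.Gamma (x + 1))) ^ 2 := by gcongr
    _ = _ := by rw [mul_pow, Real.sq_sqrt h0.le, Real.sq_sqrt h1.le]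

lemma tendsto_Gamma_add_half_div_sq :
    Tendsto (fun x : ℝ => (Real.Gamma (x + 1 / 2) / Real.Gamma x) ^ 2 / x) atTop (𝓝 1) := by
  have hlow : Tendsto (fun x : ℝ => 1 - (1 / 2) / x) atTop (𝓝 1) := by
    simpa using (tendsto_id.const_div_atTop (1 / 2 : ℝ)).const_sub 1
  refine tendsto_of_tendsto_of_tendsto_of_le_of_le' hlow tendsto_const_nhds ?_ ?_
  · filter_upwards [eventually_gt_atTop (1 / 2 : ℝ)] with x hx
    have hx0 : 0 < x := by linarith
    have hx1 : 0 < x - 1 / 2 := by linarith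
    have h := Gamma_add_half_sq_le hx1
    have h2 := Real.Gamma_add_one hx1.ne'
    rw [show x - 1 / 2 + 1 = x + 1 / 2 by ring] at h h2
    rw [sub_add_cancel] at h
    have g0 := Real.Gamma_pos_of_pos hx0
    have g1 := Real.Gamma_pos_of_pos hx1
    have g2 := Real.Gamma_pos_of_pos (by positivity : 0 < x + 1 / 2)
    rw [div_pow, div_div (Real.Gamma (x + 1 / 2) ^ 2), le_div_iff₀ (by positivity)]
    calc (1 - 1 / 2 / x) * (Real.Gamma x ^ 2 * x) = (x - 1 / 2) * Real.Gamma x ^ 2 := by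
          field_simp
      _ ≤ (x - 1 / 2) * (Real.Gamma (x - 1 / 2) * Real.Gamma (x + 1 / 2)) := by gcongr
      _ = Real.Gamma (x + 1 / 2) ^ 2 := by rw [← mul_assoc, ← h2, sq]
  · filter_upwards [eventually_gt_atTop (0 : ℝ)] with x hx
    have h := Gamma_add_half_sq_le hx
    rw [Real.Gamma_add_one hx.ne'] at h
    have g0 := Real.Gamma_pos_of_pos hx
    rw [div_pow, div_div, div_le_one (by positivity)]
    linarith

lemma tendsto_natCast_half_sub_one : Tendsto (fun d : ℕ => (d : ℝ) / 2 - 1) atTop atTop :=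
  (tendsto_atTop_add_const_right _ (-1)
    (tendsto_natCast_atTop_atTop.atTop_div_const two_pos)).congr fun d => by ring

lemma tendsto_besselJZero1_div_natCast :
    Tendsto (fun d : ℕ => besselJZero1 ((d : ℝ) / 2 - 1) / d) atTop (𝓝 (1 / 2)) := by
  have h : Tendsto (fun d : ℕ => 1 / 2 - 1 / (d : ℝ)) atTop (𝓝 (1 / 2)) := by
    have := (tendsto_natCast_atTop_atTop (R := ℝ)).const_div_atTop 1 |>.const_sub (1 / 2)
    rwa [sub_zero] at this
  have h2 := (tendsto_besselJZero1_div_self.comp tendsto_natCast_half_sub_one).mul h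
  rw [one_mul] at h2
  refine h2.congr' ?_
  filter_upwards [eventually_gt_atTop 2] with d hd
  have hd' : (2 : ℝ) < d := by exact_mod_cast hd
  have h0 : (d : ℝ) / 2 - 1 ≠ 0 := by linarith
  have h1 : (d : ℝ) - 2 ≠ 0 := by linarith
  simp only [Function.comp_apply]
  field_simp

lemma eventually_isBesselGroundState :
    ∀ᶠ ν in atTop, IsBesselGroundState ν ∧ ν < besselJZero1 ν := by
  filter_upwards [eventually_gt_atTop (2 * Real.pi)] with ν hν
  have hpi := Real.pi_pos
  have h : (2 * Real.pi / 1) ^ 2 < ν ^ 2 * 1 := by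
    rw [div_one, mul_one]
    gcongr
  obtain ⟨h1, h2, -⟩ := besselJZero1_le (by linarith) one_pos h
  exact ⟨h1, h2⟩

lemma tendsto_besselJZero1_sub :
    Tendsto (fun d : ℕ => besselJZero1 (((d + 1 : ℕ) : ℝ) / 2 - 1) - besselJZero1 ((d : ℝ) / 2 - 1))
      atTop (𝓝 (1 / 2)) := by
  set j : ℕ → ℝ := fun d => besselJZero1 ((d : ℝ) / 2 - 1) with hj
  set A : ℕ → ℝ := fun d => ((d : ℝ) / 2 - 1) ^ 2 with hA
  obtain ⟨N, hN⟩ := eventually_atTop.1 ((tendsto_natCast_half_sub_one.eventually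
    eventually_isBesselGroundState).and (tendsto_natCast_half_sub_one.eventually_gt_atTop 0))
  have hpos : ∀ d ≥ N, 0 < j d := fun d hd => (hN d hd).2.trans (hN d hd).1.2
  have hlt : ∀ d ≥ N, j d < j (d + 1) := fun d hd =>
    (hN d hd).1.1.lt (hN d hd).2.le (by push_cast; linarith) (hN (d + 1) (by omega)).1.1
      (hpos _ (by omega)).le
  have hlt2 : ∀ d ≥ N, j d ^ 2 < j (d + 1) ^ 2 := fun d hd =>
    pow_lt_pow_left₀ (hlt d hd) (hpos d hd).le two_ne_zero
  have hjd : Tendsto (fun d => j d / d) atTop (𝓝 (1 / 2)) := tendsto_besselJZero1_div_natCast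
  have hjtop : Tendsto (fun d => j d ^ 2) atTop atTop := by
    refine (tendsto_pow_atTop two_ne_zero).comp
      (tendsto_atTop_mono' _ ?_ tendsto_natCast_half_sub_one)
    filter_upwards [eventually_ge_atTop N] with d hd
    exact (hN d hd).1.2.le
  have hAj : Tendsto (fun d => A d / j d ^ 2) atTop (𝓝 1) := by
    have h := ((tendsto_besselJZero1_div_self.comp tendsto_natCast_half_sub_one).inv₀
      one_ne_zero).pow 2
    rw [inv_one, one_pow] at h
    refine h.congr fun d => ?_
    simp only [Function.comp_apply, inv_div, div_pow, hA, hj]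
  have hS := tendsto_slope_of_monotone (A := A) (M := fun d => j d ^ 2) hlt2
    (fun d hd => (hN d hd).1.1.slope_le (hN (d + 1) (by omega)).1.1 (hN (d + 2) (by omega)).1.1
      (hlt2 d hd) (hlt2 (d + 1) (by omega))) hjtop hAj
  have hj1 : Tendsto (fun d : ℕ => j (d + 1) / d) atTop (𝓝 (1 / 2)) := by
    have h : Tendsto (fun d : ℕ => 1 + 1 / (d : ℝ)) atTop (𝓝 1) := by
      simpa using (tendsto_natCast_atTop_atTop (R := ℝ)).const_div_atTop 1 |>.const_add 1
    have h2 := (hjd.comp (tendsto_add_atTop_nat 1)).mul h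
    rw [mul_one] at h2
    refine h2.congr' ?_
    filter_upwards [eventually_gt_atTop 0] with d hd
    simp only [Function.comp_apply]
    push_cast
    field_simp
  have hν : Tendsto (fun d : ℕ => 1 / 2 - 3 / 4 / (d : ℝ)) atTop (𝓝 (1 / 2)) := by
    have := (tendsto_natCast_atTop_atTop (R := ℝ)).const_div_atTop (3 / 4) |>.const_sub (1 / 2)
    rwa [sub_zero] at this
  have h := (hν.div (hjd.add hj1) (by norm_num)).div hS one_ne_zero
  norm_num at h
  refine h.congr' ?_
  filter_upwards [eventually_ge_atTop N, eventually_gt_atTop 0] with d hd hd0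
  have p0 := hpos d hd
  have p1 := hpos (d + 1) (by omega)
  have p2 := sub_pos.2 (hlt d hd)
  have hν0 := (hN d hd).2
  have hd0' : (0 : ℝ) < d := by exact_mod_cast hd0
  have hAd : A (d + 1) - A d = 1 / 2 * (d - 3 / 2) := by
    simp only [hA]
    push_cast
    ring
  have hd23 : 2 * (d : ℝ) - 3 ≠ 0 := by linarith
  simp only [Pi.div_apply]
  rw [hAd, sq_sub_sq]
  change _ = j (d + 1) - j d
  field_simp
  ring

theorem pleijelGamma_quotient_tendsto :
    Filter.Tendsto (fun d : ℕ => pleijelGamma (d + 1) / pleijelGamma d)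
      Filter.atTop (nhds (2 / Real.exp 1)) := by
  set j : ℕ → ℝ := fun d => besselJZero1 ((d : ℝ) / 2 - 1) with hj
  have hjd : Tendsto (fun d => j d / d) atTop (𝓝 (1 / 2)) := tendsto_besselJZero1_div_natCast
  have hsub : Tendsto (fun d => j (d + 1) - j d) atTop (𝓝 (1 / 2)) := tendsto_besselJZero1_sub
  have hpos : ∀ᶠ d in atTop, 0 < j d := by
    filter_upwards [hjd.eventually_const_lt (half_pos one_pos), eventually_gt_atTop 0] with d h hd
    exact (div_pos_iff_of_pos_right (by exact_mod_cast hd)).1 h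
  have hpos1 : ∀ᶠ d in atTop, 0 < j (d + 1) := (tendsto_add_atTop_nat 1).eventually hpos
  have hone : Tendsto (fun d : ℕ => 1 + 1 / (d : ℝ)) atTop (𝓝 1) := by
    simpa using (tendsto_natCast_atTop_atTop (R := ℝ)).const_div_atTop 1 |>.const_add 1
  have hj1 : Tendsto (fun d : ℕ => (d : ℝ) / j (d + 1)) atTop (𝓝 2) := by
    have h := ((hjd.comp (tendsto_add_atTop_nat 1)).mul hone).inv₀ (by norm_num)
    rw [show ((1 / 2 * 1 : ℝ))⁻¹ = 2 by norm_num] at h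
    refine h.congr' ?_
    filter_upwards [eventually_gt_atTop 0, hpos1] with d hd hp
    simp only [Function.comp_apply]
    push_cast
    field_simp
  have hexp : Tendsto (fun d : ℕ => (1 + -((j (d + 1) - j d) / j (d + 1))) ^ d) atTop
      (𝓝 (Real.exp (-1))) := by
    refine Real.tendsto_one_add_pow_exp_of_tendsto ?_
    have h := (hj1.mul hsub).neg
    rw [mul_one_div_cancel two_ne_zero] at h
    refine h.congr fun d => ?_
    ring
  have hΓ : Tendsto (fun d : ℕ => (Real.Gamma ((d : ℝ) / 2 + 1 / 2) / Real.Gamma ((d : ℝ) / 2)) ^ 2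
      / ((d : ℝ) / 2)) atTop (𝓝 1) :=
    tendsto_Gamma_add_half_div_sq.comp (tendsto_natCast_atTop_atTop.atTop_div_const two_pos)
  have h := (((hone.pow 2).mul hΓ).mul hj1).mul hexp
  rw [one_pow, one_mul, one_mul, Real.exp_neg, ← div_eq_mul_inv] at h
  refine h.congr' ?_
  filter_upwards [eventually_gt_atTop 0, hpos, hpos1] with d hd p0 p1
  have hd' : (0 : ℝ) < d := by exact_mod_cast hd
  have g0 : 0 < Real.Gamma ((d : ℝ) / 2) := Real.Gamma_pos_of_pos (by positivity)
  have e1 : 1 + -((j (d + 1) - j d) / j (d + 1)) = j d / j (d + 1) := by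
    field_simp
    ring
  have e2 : pleijelGamma d = 2 ^ ((d : ℝ) - 2) * (d : ℝ) ^ 2 * Real.Gamma ((d : ℝ) / 2) ^ 2 /
      j d ^ d := by
    rw [pleijelGamma, Real.rpow_natCast]
  have e3 : pleijelGamma (d + 1) = 2 ^ ((d : ℝ) - 2) * 2 * ((d : ℝ) + 1) ^ 2 *
      Real.Gamma ((d : ℝ) / 2 + 1 / 2) ^ 2 / (j (d + 1) ^ d * j (d + 1)) := by
    rw [pleijelGamma, Real.rpow_natCast, ← pow_succ]
    push_cast
    rw [show (d : ℝ) + 1 - 2 = (d - 2) + 1 by ring, Real.rpow_add_one two_ne_zero, add_div]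
    simp only [hj]
    push_cast
    rw [add_div]
  simp only [e1, e2, e3, div_pow]
  have : (0 : ℝ) < 2 ^ ((d : ℝ) - 2) := by positivity
  field_simp
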